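/- Let {f_α}_{α∈A} : 𝒮_X → 𝒮_Y be a morphism between two πτ-spectra 𝒮_X = {X_α, p_α^β, A} and 𝒮_Y = {Y_α, π_α^β, A} with surjective limit projections, and suppose the limit map lim f_α : lim 𝒮_X → lim 𝒮_Y is skeletal. Then the set B = {α ∈ A : the limit ↓α-square of the morphism is skeletal} is cofinal in A. -/

import Mathlib

open Set Topology

universe u

/-- A continuous map `f : X → Y` is *skeletal* if for every non-empty open `U ⊆ X` the
closure of `f(U)` has non-empty interior. -/
def Skeletal {X Y : Type*} [TopologicalSpace X] [TopologicalSpace Y] (f : X → Y) : Prop :=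
  ∀ U : Set X, IsOpen U → U.Nonempty → (interior (closure (f '' U))).Nonempty

/-- A commutative square (top map `g' : X' → Y'`, bottom map `g : X → Y`, vertical maps
`qX : X' → X`, `qY : Y' → Y`) is *skeletal* if for each point `x ∈ X` and each neighborhood
`U` of `x` there is a non-empty open `V ⊆ Y` with `V ⊆ cl (g '' U)` and
`qY ⁻¹' V ⊆ cl (g' '' (qX ⁻¹' U))`. -/
def SkeletalSquare {X Y X' Y' : Type*} [TopologicalSpace X] [TopologicalSpace Y]
    [TopologicalSpace X'] [TopologicalSpace Y']
    (g' : X' → Y') (g : X → Y) (qX : X' → X) (qY : Y' → Y) : Prop :=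
  ∀ x : X, ∀ U ∈ 𝓝 x, ∃ V : Set Y, IsOpen V ∧ V.Nonempty ∧ V ⊆ closure (g '' U) ∧
    qY ⁻¹' V ⊆ closure (g' '' (qX ⁻¹' U))

/-- An *inverse spectrum* over a partially ordered index set `A`: topological spaces `X a`
together with continuous bonding maps `bond h : X b → X a` for `h : a ≤ b`, satisfying the
usual identity and composition laws. -/
structure InvSpec (A : Type u) [PartialOrder A] : Type (u + 1) where
  X : A → Type u
  [topX : ∀ a, TopologicalSpace (X a)]
  bond : ∀ {a b : A}, a ≤ b → X b → X a
  bond_cont : ∀ {a b : A} (h : a ≤ b), Continuous (bond h)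
  bond_refl : ∀ (a : A) (x : X a), bond le_rfl x = x
  bond_comp : ∀ {a b c : A} (hab : a ≤ b) (hbc : b ≤ c) (x : X c),
    bond hab (bond hbc x) = bond (hab.trans hbc) x

attribute [instance] InvSpec.topX

variable {A : Type u} [PartialOrder A]

/-- The limit `lim 𝒮` of an inverse spectrum, as the set of threads in the product. -/
def InvSpec.limitSet (S : InvSpec A) : Set (∀ a, S.X a) :=
  {x | ∀ (a b : A) (h : a ≤ b), S.bond h (x b) = x a}

/-- The limit projection `p_a : lim 𝒮 → X a`. -/
def InvSpec.proj (S : InvSpec A) (a : A) : S.limitSet → S.X a := fun x => x.1 a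

/-- A *morphism* between two inverse spectra over the same index set: a family of continuous
maps `f a : X a → Y a` commuting with the bonding maps. -/
structure SpecMor (S T : InvSpec A) where
  maps : ∀ a, S.X a → T.X a
  maps_cont : ∀ a, Continuous (maps a)
  comm : ∀ {a b : A} (h : a ≤ b) (x : S.X b), maps a (S.bond h x) = T.bond h (maps b x)

/-- The limit map `lim f_a : lim 𝒮_X → lim 𝒮_Y` of a morphism of spectra. -/
def SpecMor.limMap {S T : InvSpec A} (F : SpecMor S T) : S.limitSet → T.limitSet :=
  fun x => ⟨fun a => F.maps a (x.1 a),
    fun a b h => by rw [← F.comm h (x.1 b), x.2 a b h]⟩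

/-- The *limit `↓a`-square* of a morphism (top map `lim f`, bottom map `f a`, verticals the
limit projections) is skeletal. -/
def LimitSquareSkeletal {S T : InvSpec A} (F : SpecMor S T) (a : A) : Prop :=
  SkeletalSquare F.limMap (F.maps a) (S.proj a) (T.proj a)

/-- The *bonding `↓_a^b`-square* of a morphism (top map `f b`, bottom map `f a`, verticals
the bonding maps) is skeletal. -/
def BondingSquareSkeletal {S T : InvSpec A} (F : SpecMor S T) {a b : A} (h : a ≤ b) : Prop :=
  SkeletalSquare (F.maps b) (F.maps a) (S.bond h) (T.bond h)

/-- A family of non-empty open sets is a *π-base* if every non-empty open set contains a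
member of the family. -/
def IsPiBase {Z : Type*} [TopologicalSpace Z] (B : Set (Set Z)) : Prop :=
  (∀ U ∈ B, IsOpen U ∧ U.Nonempty) ∧
  ∀ U : Set Z, IsOpen U → U.Nonempty → ∃ V ∈ B, V ⊆ U

/-- The *π-weight* of a space: the smallest cardinality of a π-base. -/
noncomputable def piWeight (Z : Type u) [TopologicalSpace Z] : Cardinal.{u} :=
  ⨅ B : {B : Set (Set Z) // IsPiBase B}, Cardinal.mk B.1

/-- A partially ordered set is *κ-directed* if every subset of cardinality `≤ κ` has an
upper bound. -/
def CardDirected (A : Type u) [PartialOrder A] (κ : Cardinal.{u}) : Prop :=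
  ∀ K : Set A, Cardinal.mk K ≤ κ → ∃ ub : A, ∀ k ∈ K, k ≤ ub

/-- A partially ordered set is *ω-complete* if every (non-empty) countable chain has a least
upper bound. -/
def OmegaComplete (A : Type u) [PartialOrder A] : Prop :=
  ∀ C : Set A, C.Countable → C.Nonempty → IsChain (· ≤ ·) C → ∃ b : A, IsLUB C b

/-- The limit of the restriction of a spectrum to a subset `C` of the index set. -/
def InvSpec.limitSetOn (S : InvSpec A) (C : Set A) : Set (∀ c : C, S.X c) :=
  {x | ∀ (c d : C) (h : (c : A) ≤ (d : A)), S.bond h (x d) = x c}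

/-- The canonical map `X g → lim {X a, a ∈ C}` when `g` is a least upper bound of `C`. -/
def InvSpec.toLimitOn (S : InvSpec A) {C : Set A} {g : A} (hg : IsLUB C g) :
    S.X g → S.limitSetOn C :=
  fun xg => ⟨fun c => S.bond (hg.1 c.2) xg, fun c d h => S.bond_comp h (hg.1 d.2) xg⟩

/-- A spectrum is *continuous* (τ-continuous) if for every non-empty directed subset `C` of
the index set having a least upper bound `g`, the canonical map `X g → lim {X a, a ∈ C}` is
a homeomorphism. -/
def InvSpec.IsContinuousSpectrum (S : InvSpec A) : Prop :=
  ∀ (C : Set A) (g : A), C.Nonempty → DirectedOn (· ≤ ·) C → ∀ hg : IsLUB C g,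
    IsHomeomorph (S.toLimitOn hg)

/-- A *πτ-spectrum*: all spaces have π-weight `≤ τ`, the index set is τ-directed and
ω-complete, and the spectrum is τ-continuous. -/
def IsPiTauSpectrum (τ : Cardinal.{u}) (S : InvSpec A) : Prop :=
  (∀ a : A, piWeight (S.X a) ≤ τ) ∧ CardDirected A τ ∧ OmegaComplete A ∧
    S.IsContinuousSpectrum

/-- A subset `C` of a directed poset is *cofinal* if every element of the poset is below
some element of `C`. -/
def IsCofinalSub {A : Type u} [PartialOrder A] (C : Set A) : Prop :=
  ∀ a : A, ∃ b ∈ C, a ≤ b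

/-- A subset `C` is *τ-closed* (equivalently ω-closed) if for each (non-empty) directed
subset `D ⊆ C` having a least upper bound in `A`, this least upper bound belongs to `C`. -/
def IsSupClosed {A : Type u} [PartialOrder A] (C : Set A) : Prop :=
  ∀ D ⊆ C, D.Nonempty → DirectedOn (· ≤ ·) D → ∀ g : A, IsLUB D g → g ∈ C

/-- If `Z` carries the topology induced by a compatible family of maps into the spaces of a
spectrum indexed by a directed family, then the preimages of open sets under the single maps
form a base of `Z`. -/
theorem InvSpec.exists_coord_nhds (S : InvSpec A) {ι Z : Type*} [Nonempty ι]
    [TopologicalSpace Z] {φ : ι → A} (hφ : Directed (· ≤ ·) φ) {e : Z → ∀ i, S.X (φ i)}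
    (he : IsInducing e)
    (hcomp : ∀ (i k : ι) (h : φ i ≤ φ k) (z : Z), S.bond h (e z k) = e z i)
    {U : Set Z} (hU : IsOpen U) {z : Z} (hz : z ∈ U) :
    ∃ (i : ι) (V : Set (S.X (φ i))), IsOpen V ∧ e z i ∈ V ∧ (fun w => e w i) ⁻¹' V ⊆ U := by
  obtain ⟨O, hO, rfl⟩ := he.isOpen_iff.1 hU
  obtain ⟨I, u, hu, hIu⟩ := isOpen_pi_iff.1 hO (e z) hz
  obtain ⟨k, hk⟩ := hφ.finset_le I
  refine ⟨k, ⋂ i : I, S.bond (hk i i.2) ⁻¹' u i, ?_, ?_, ?_⟩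
  · exact isOpen_iInter_of_finite fun i => (hu i i.2).1.preimage (S.bond_cont _)
  · refine mem_iInter.2 fun i => ?_
    rw [mem_preimage, hcomp]
    exact (hu i i.2).2
  · intro w hw
    refine hIu fun i hi => ?_
    have hwi := mem_iInter.1 hw ⟨i, hi⟩
    rwa [mem_preimage, hcomp] at hwi

/-- The π-weight is attained by some π-base. -/
theorem exists_isPiBase_mk_eq_piWeight (Z : Type u) [TopologicalSpace Z] :
    ∃ P : Set (Set Z), IsPiBase P ∧ Cardinal.mk P = piWeight Z := by
  have : Nonempty {B : Set (Set Z) // IsPiBase B} :=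
    ⟨{U | IsOpen U ∧ U.Nonempty}, fun _ hU => hU, fun U hU hne => ⟨U, ⟨hU, hne⟩, subset_rfl⟩⟩
  obtain ⟨P, hP⟩ := ciInf_mem fun B : {B : Set (Set Z) // IsPiBase B} => Cardinal.mk B.1
  exact ⟨P.1, P.2, hP⟩

theorem CardDirected.isDirectedOrder {κ : Cardinal.{u}} (hA : CardDirected A κ)
    (hκ : Cardinal.aleph0 ≤ κ) : IsDirectedOrder A where
  directed a b := by
    obtain ⟨c, hc⟩ := hA {a, b} ((Cardinal.mk_le_aleph0_iff.2 (Set.toFinite _).countable).trans hκ)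
    exact ⟨c, hc a (by simp), hc b (by simp)⟩

theorem InvSpec.continuous_proj (S : InvSpec A) (a : A) : Continuous (S.proj a) :=
  (continuous_apply a).comp continuous_subtype_val

/-- Every index `a` lies below some `b` such that the skeletality of the limit map at preimages
of open subsets of `X a` is witnessed by open subsets of `Y b`. -/
theorem SpecMor.exists_ge_forall_isOpen_exists_proj_preimage_subset {S T : InvSpec A}
    (F : SpecMor S T) {τ : Cardinal.{u}} (hτ : Cardinal.aleph0 ≤ τ) (hA : CardDirected A τ)
    (a : A) (hw : piWeight (S.X a) ≤ τ) (hS : Function.Surjective (S.proj a))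
    (hsk : Skeletal F.limMap) :
    ∃ b, a ≤ b ∧ ∀ U : Set (S.X a), IsOpen U → U.Nonempty →
      ∃ V : Set (T.X b), IsOpen V ∧ (T.proj b ⁻¹' V).Nonempty ∧
        T.proj b ⁻¹' V ⊆ closure (F.limMap '' (S.proj a ⁻¹' U)) := by
  have := hA.isDirectedOrder hτ
  have : Nonempty A := ⟨a⟩
  obtain ⟨P, hP, hcard⟩ := exists_isPiBase_mk_eq_piWeight (S.X a)
  have key : ∀ U : P, ∃ (b : A) (V : Set (T.X b)), IsOpen V ∧ (T.proj b ⁻¹' V).Nonempty ∧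
      T.proj b ⁻¹' V ⊆ closure (F.limMap '' (S.proj a ⁻¹' U)) := by
    intro U
    obtain ⟨hU, hne⟩ := hP.1 U U.2
    obtain ⟨y, hy⟩ := hsk _ (hU.preimage (S.continuous_proj a)) (hne.preimage hS)
    obtain ⟨b, V, hV, hyV, hsub⟩ := T.exists_coord_nhds (φ := id) (e := fun z : T.limitSet => z.1)
      directed_id IsInducing.subtypeVal (fun i k h z => z.2 i k h) isOpen_interior hy
    exact ⟨b, V, hV, ⟨y, hyV⟩, hsub.trans interior_subset⟩
  choose b V hV hne hsub using key
  obtain ⟨c, hc⟩ := hA (range b) (Cardinal.mk_range_le.trans (hcard.trans_le hw))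
  obtain ⟨d, had, hcd⟩ := exists_ge_ge a c
  refine ⟨d, had, fun U hU hUne => ?_⟩
  obtain ⟨U', hU', hUU⟩ := hP.2 U hU hUne
  have hbd : b ⟨U', hU'⟩ ≤ d := (hc _ (mem_range_self _)).trans hcd
  have hpre : T.proj d ⁻¹' (T.bond hbd ⁻¹' V ⟨U', hU'⟩) = T.proj _ ⁻¹' V ⟨U', hU'⟩ := by
    ext y
    simp only [mem_preimage, InvSpec.proj]
    rw [y.2 _ _ hbd]
  refine ⟨T.bond hbd ⁻¹' V ⟨U', hU'⟩, (hV _).preimage (T.bond_cont _), ?_, ?_⟩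
  · rw [hpre]
    exact hne _
  · rw [hpre]
    exact (hsub _).trans (closure_mono (image_mono (preimage_mono hUU)))

/-- If the limit map of a morphism between two πτ-spectra with surjective limit projections
is skeletal, then the set `B = {a : the limit ↓a-square is skeletal}` is cofinal in the
index set. -/
theorem cofinal_limitSquareSkeletal {A : Type u} [PartialOrder A] [Nonempty A]
    (τ : Cardinal.{u}) (hτ : Cardinal.aleph0 ≤ τ) (S T : InvSpec A) (F : SpecMor S T)
    (hSτ : IsPiTauSpectrum τ S) (hTτ : IsPiTauSpectrum τ T)
    (hS : ∀ a : A, Function.Surjective (S.proj a))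
    (hT : ∀ a : A, Function.Surjective (T.proj a))
    (hsk : Skeletal F.limMap) :
    IsCofinalSub {a : A | LimitSquareSkeletal F a} := by
  intro a₀
  obtain ⟨hw, hA, hω, hcont⟩ := hSτ
  choose nxt hle hnxt using fun a =>
    F.exists_ge_forall_isOpen_exists_proj_preimage_subset hτ hA a (hw a) (hS a) hsk
  let s : ℕ → A := fun n => nxt^[n] a₀
  have hs : ∀ n, s (n + 1) = nxt (s n) := fun n => Function.iterate_succ_apply' nxt n a₀
  have hmono : Monotone s := monotone_nat_of_le_succ fun n => (hs n).symm ▸ hle (s n)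
  obtain ⟨g, hg⟩ := hω (range s) (countable_range s) (range_nonempty s) hmono.isChain_range
  have hdir : DirectedOn (· ≤ ·) (range s) := hmono.directed_le.directedOn_range
  refine ⟨g, fun x U hU => ?_, hg.1 ⟨0, rfl⟩⟩
  obtain ⟨U₁, hU₁, hU₁o, hxU₁⟩ := mem_nhds_iff.1 hU
  have : Nonempty (range s) := (range_nonempty s).to_subtype
  obtain ⟨⟨_, n, rfl⟩, U₂, hU₂, hxU₂, hsub⟩ := S.exists_coord_nhds (φ := Subtype.val)
    hdir.directed_val
    (IsInducing.subtypeVal.comp (hcont _ g (range_nonempty s) hdir hg).isInducing)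
    (fun i k h z => S.bond_comp h (hg.1 k.2) z) hU₁o hxU₁
  have hsg : s n ≤ g := hg.1 ⟨n, rfl⟩
  have hng : nxt (s n) ≤ g := hs n ▸ hg.1 ⟨n + 1, rfl⟩
  obtain ⟨V, hV, ⟨y, hy⟩, hVsub⟩ := hnxt (s n) U₂ hU₂ ⟨_, hxU₂⟩
  have htop : T.proj g ⁻¹' (T.bond hng ⁻¹' V) ⊆ closure (F.limMap '' (S.proj g ⁻¹' U)) := by
    intro z hz
    have hz' : T.bond hng (z.1 g) ∈ V := hz
    rw [z.2 _ _ hng] at hz'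
    have hpre : S.proj (s n) ⁻¹' U₂ ⊆ S.proj g ⁻¹' U := by
      intro w hw
      refine hU₁ (hsub ?_)
      have hw' : w.1 (s n) ∈ U₂ := hw
      rwa [← w.2 _ _ hsg] at hw'
    exact closure_mono (image_mono hpre) (hVsub hz')
  refine ⟨T.bond hng ⁻¹' V, hV.preimage (T.bond_cont _), ⟨y.1 g, ?_⟩, ?_, htop⟩
  · rw [mem_preimage, y.2 _ _ hng]
    exact hy
  · intro v hv
    obtain ⟨z, rfl⟩ := hT g v
    refine closure_mono ?_
      (image_closure_subset_closure_image (T.continuous_proj g) (mem_image_of_mem _ (htop hv)))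
    rintro _ ⟨_, ⟨w, hw, rfl⟩, rfl⟩
    exact ⟨w.1 g, hw, rfl⟩
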